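/- Let n ≥ 1 and f ∈ LCₙ. Then the functional affine surface area and the functional geominimal surface area satisfy Ω♯(f)^{n+1} ≤ n·ωₙ·G♯(f)^n. -/

import Mathlib

open MeasureTheory Filter Set Metric
open scoped Topology NNReal ENNReal Pointwise RealInnerProductSpace

noncomputable section

abbrev Euc (n : ℕ) := EuclideanSpace ℝ (Fin n)

/-- `f` is log-concave: `f((1-λ)x + λy) ≥ f(x)^{1-λ} f(y)^λ`. -/
def IsLogConcaveFn {n : ℕ} (f : Euc n → ℝ) : Prop :=
  ∀ x y : Euc n, ∀ a b : ℝ, 0 ≤ a → 0 ≤ b → a + b = 1 →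
    (f x) ^ a * (f y) ^ b ≤ f (a • x + b • y)

/-- The class `LCₙ`. -/
structure MemLC {n : ℕ} (f : Euc n → ℝ) : Prop where
  nonneg : ∀ x, 0 ≤ f x
  usc : UpperSemicontinuous f
  logConcave : IsLogConcaveFn f
  nonzero : ∃ x, 0 < f x
  tendsto_zero : Tendsto f (cocompact (Euc n)) (𝓝 0)
  support_interior : (interior {x | 0 < f x}).Nonempty

/-- `(f ⋆ (t·1_C))(x) = sup_{z ∈ tC} f(x − z)`. -/
def indSup {n : ℕ} (f : Euc n → ℝ) (C : Set (Euc n)) (t : ℝ) (x : Euc n) : ℝ :=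
  ⨆ z ∈ t • C, f (x - z)

/-- The first variation `δ(f, 1_C)` exists and equals `a`. -/
def HasVarInd {n : ℕ} (f : Euc n → ℝ) (C : Set (Euc n)) (a : ℝ) : Prop :=
  Tendsto (fun t : ℝ => ((∫ x, indSup f C t x) - ∫ x, f x) / t)
    (𝓝[>] (0 : ℝ)) (𝓝 a)

/-- The radial function `ρ_Q(u) = max {r ≥ 0 : r u ∈ Q}`. -/
def radialFn {n : ℕ} (Q : Set (Euc n)) (u : Euc n) : ℝ :=
  sSup {r : ℝ | 0 ≤ r ∧ r • u ∈ Q}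

/-- A centered star body: compact, `0` in the interior, star-shaped about the origin,
continuous radial function on the sphere, centroid at the origin. -/
structure IsCenteredStarBody {n : ℕ} (Q : Set (Euc n)) : Prop where
  compact : IsCompact Q
  zero_mem_interior : (0 : Euc n) ∈ interior Q
  starShaped : ∀ x ∈ Q, ∀ r : ℝ, 0 ≤ r → r ≤ 1 → r • x ∈ Q
  radial_continuous : ContinuousOn (radialFn Q) (sphere (0 : Euc n) 1)
  centroid_zero : (∫ x in Q, x) = (0 : Euc n)

/-- The polar set `Q° = {y : ⟪x,y⟫ ≤ 1 for all x ∈ Q}`. -/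
def polarSet {n : ℕ} (Q : Set (Euc n)) : Set (Euc n) :=
  {y : Euc n | ∀ x ∈ Q, ⟪x, y⟫ ≤ 1}

/-- The set `A_f = {a · vol(Q)^{1/n} : Q a centered star body with δ(f, 1_{Q°}) = a}`. -/
def asaSet (n : ℕ) (f : Euc n → ℝ) : Set ℝ :=
  {y : ℝ | ∃ (Q : Set (Euc n)) (a : ℝ), IsCenteredStarBody Q ∧
    HasVarInd f (polarSet Q) a ∧ y = a * (volume Q).toReal ^ ((1 : ℝ) / n)}

/-- The functional affine surface area `Ω♯(f) = n^{1/(n+1)} (inf A_f)^{n/(n+1)}`. -/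
def affSA (n : ℕ) (f : Euc n → ℝ) : ℝ :=
  (n : ℝ) ^ ((1 : ℝ) / ((n : ℝ) + 1)) * (sInf (asaSet n f)) ^ ((n : ℝ) / ((n : ℝ) + 1))

/-- The set of values `a · (vol(Q)/ωₙ)^{1/n}` over convex bodies `Q` with centroid at the
origin such that `δ(f, 1_{Q°}) = a`. -/
def gsaSet (n : ℕ) (f : Euc n → ℝ) : Set ℝ :=
  {y : ℝ | ∃ (Q : Set (Euc n)) (a : ℝ), IsCompact Q ∧ Convex ℝ Q ∧
    (interior Q).Nonempty ∧ (∫ x in Q, x) = (0 : Euc n) ∧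
    HasVarInd f (polarSet Q) a ∧
    y = a * ((volume Q).toReal / (volume (closedBall (0 : Euc n) 1)).toReal)
      ^ ((1 : ℝ) / n)}

/-- The functional geominimal surface area `G♯(f)`. -/
def geomSA (n : ℕ) (f : Euc n → ℝ) : ℝ := sInf (gsaSet n f)

/-!
A convex body with centroid `0` has `0` in its interior and a continuous radial function, so it is a
centered star body. Up to the factor `ωₙ ^ (1 / n)`, the infimum defining `Ω♯` is therefore taken
over a larger family than the one defining `G♯`, which gives the inequality.

The substantial point is that the smaller family is nonempty; otherwise `G♯` would be `sInf ∅ = 0`.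
It contains the cross-polytope, whose polar is the cube `C`, a sum of segments on the coordinate
axes. Adding a segment of length `2t` in the direction `eᵢ` to a compact convex set increases its
volume by `2t` times the volume of its projection along `eᵢ`, and the projections of `K + tD` grow
with `t` when `D` is a partial sum of the segments. Adding the segments one by one shows that
`(vol (K + tC) - vol K) / t` is nondecreasing in `t`. Integrating over the superlevel sets `K` of
`f`, the difference quotient in `δ(f, 1_C)` is nonnegative and nondecreasing, so its limit at `0⁺`
exists.
-/

section Bodies

variable {E : Type*} [NormedAddCommGroup E] [NormedSpace ℝ E] [MeasurableSpace E]

lemma setIntegral_id_eq_zero_of_neg_eq [MeasurableNeg E] {μ : Measure E} [μ.IsNegInvariant]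
    {s : Set E} (hs : -s = s) : ∫ x in s, x ∂μ = 0 := by
  have hflip : ∫ x in s, -x ∂μ = ∫ x in s, x ∂μ := by
    conv_lhs => rw [← hs]
    exact (Measure.measurePreserving_neg μ).setIntegral_preimage_emb
      (MeasurableEquiv.neg E).measurableEmbedding id s
  rw [integral_neg] at hflip
  have : IsAddTorsionFree E := .of_isTorsionFree ℝ E
  exact neg_eq_self.1 hflip

lemma zero_mem_interior_of_setIntegral_id_eq_zero [BorelSpace E] [CompleteSpace E]
    {μ : Measure E} [IsFiniteMeasureOnCompacts μ] [μ.IsOpenPosMeasure] {Q : Set E}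
    (hQ : IsCompact Q) (hconv : Convex ℝ Q) (hint : (interior Q).Nonempty)
    (hcentroid : ∫ x in Q, x ∂μ = 0) : (0 : E) ∈ interior Q := by
  by_contra h0
  obtain ⟨l, hl⟩ := geometric_hahn_banach_open_point hconv.interior isOpen_interior h0
  rw [map_zero] at hl
  have hclosure : Q ⊆ closure (interior Q) := by
    rw [hconv.closure_interior_eq_closure_of_nonempty_interior hint]
    exact subset_closure
  have hl_nonpos : ∀ x ∈ Q, l x ≤ 0 := fun x hx =>
    closure_minimal (fun y hy => (hl y hy).le) (isClosed_le l.continuous continuous_const)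
      (hclosure hx)
  have hid : IntegrableOn (fun x : E => x) Q μ := continuousOn_id.integrableOn_compact hQ
  have hneg : IntegrableOn (fun x => -l x) Q μ := (l.integrable_comp hid).neg
  have hl_int : ∫ x in Q, -l x ∂μ = 0 := by
    rw [integral_neg, l.integral_comp_comm hid, hcentroid, map_zero, neg_zero]
  have hl_pos : 0 < ∫ x in Q, -l x ∂μ := by
    rw [setIntegral_pos_iff_support_of_nonneg_ae _ hneg]
    · refine (isOpen_interior.measure_pos μ hint).trans_le (measure_mono fun x hx => ?_)
      exact ⟨neg_ne_zero.2 (hl x hx).ne, interior_subset hx⟩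
    · exact (ae_restrict_iff' hQ.measurableSet).2
        (ae_of_all _ fun x hx => neg_nonneg.2 (hl_nonpos x hx))
  exact hl_pos.ne' hl_int

end Bodies

section StarBodies

variable {n : ℕ} {Q : Set (Euc n)}

lemma radialFn_eq_inv_gauge (hconv : Convex ℝ Q) (hclosed : IsClosed Q) (h0 : Q ∈ 𝓝 0)
    {u : Euc n} (hu : 0 < gauge Q u) : radialFn Q u = (gauge Q u)⁻¹ := by
  have : {r : ℝ | 0 ≤ r ∧ r • u ∈ Q} = Icc 0 (gauge Q u)⁻¹ := by
    ext r
    have hmem : r • u ∈ Q ↔ gauge Q (r • u) ≤ 1 := by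
      rw [gauge_le_one_iff_mem_closure hconv h0, hclosed.closure_eq]
    refine and_congr_right fun hr => ?_
    rw [hmem, gauge_smul_of_nonneg hr, smul_eq_mul, ← one_div, le_div_iff₀ hu]
  rw [radialFn, this, csSup_Icc (inv_nonneg.2 hu.le)]

lemma IsCenteredStarBody.of_convex (hQ : IsCompact Q) (hconv : Convex ℝ Q)
    (hint : (interior Q).Nonempty) (hcentroid : ∫ x in Q, x = (0 : Euc n)) :
    IsCenteredStarBody Q := by
  have h0 := zero_mem_interior_of_setIntegral_id_eq_zero hQ hconv hint hcentroid
  have hnhds : Q ∈ 𝓝 (0 : Euc n) := mem_interior_iff_mem_nhds.1 h0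
  have hgauge : ∀ u ∈ sphere (0 : Euc n) 1, 0 < gauge Q u := fun u hu =>
    (gauge_pos (absorbent_nhds_zero hnhds)
      (NormedSpace.isVonNBounded_of_isBounded ℝ hQ.isBounded)).2
      (ne_zero_of_mem_unit_sphere ⟨u, hu⟩)
  refine ⟨hQ, h0, fun x hx r hr hr1 => ?_, ?_, hcentroid⟩
  · exact hconv.smul_mem_of_zero_mem (interior_subset h0) hx ⟨hr, hr1⟩
  · refine ContinuousOn.congr ?_ fun u hu =>
      radialFn_eq_inv_gauge hconv hQ.isClosed hnhds (hgauge u hu)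
    exact (continuous_gauge hconv hnhds).continuousOn.inv₀ fun u hu => (hgauge u hu).ne'

lemma zero_mem_polarSet (Q : Set (Euc n)) : (0 : Euc n) ∈ polarSet Q := fun x _ => by
  simp only [inner_zero_right, zero_le_one]

lemma isClosed_polarSet (Q : Set (Euc n)) : IsClosed (polarSet Q) := by
  simp only [polarSet, ofPred_forall]
  exact isClosed_biInter fun x _ => isClosed_le (by fun_prop) continuous_const

lemma isCompact_polarSet (h0 : (0 : Euc n) ∈ interior Q) : IsCompact (polarSet Q) := by
  obtain ⟨r, hr, hrQ⟩ := nhds_basis_closedBall.mem_iff.1 (mem_interior_iff_mem_nhds.1 h0)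
  refine (isCompact_closedBall (0 : Euc n) r⁻¹).of_isClosed_subset (isClosed_polarSet Q)
    fun y hy => ?_
  rw [mem_closedBall_zero_iff, ← one_div, le_div_iff₀' hr]
  rcases eq_or_ne y 0 with rfl | hy0
  · simp only [norm_zero, mul_zero, zero_le_one]
  have hmem : (r / ‖y‖) • y ∈ Q := hrQ <| by
    rw [mem_closedBall_zero_iff, norm_smul, norm_div, norm_norm,
      div_mul_cancel₀ _ (norm_ne_zero_iff.2 hy0), Real.norm_of_nonneg hr.le]
  calc r * ‖y‖ = ⟪(r / ‖y‖) • y, y⟫ := by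
        rw [real_inner_smul_left, real_inner_self_eq_norm_sq]
        field_simp
    _ ≤ 1 := hy _ hmem

end StarBodies

section LogConcave

variable {n : ℕ} {f : Euc n → ℝ}

lemma MemLC.isCompact_superlevel (hf : MemLC f) {c : ℝ} (hc : 0 < c) :
    IsCompact {x | c ≤ f x} := by
  obtain ⟨K, hK, hsub⟩ := mem_cocompact.1 (hf.tendsto_zero.eventually_lt_const hc)
  refine hK.of_isClosed_subset (hf.usc.isClosed_preimage c) fun x (hx : c ≤ f x) => ?_
  by_contra hxK
  exact (hsub hxK : f x < c).not_ge hx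

lemma MemLC.convex_superlevel (hf : MemLC f) {c : ℝ} (hc : 0 < c) :
    Convex ℝ {x | c ≤ f x} := by
  intro x hx y hy a b ha hb hab
  have hcx : c ≤ f x := hx
  have hcy : c ≤ f y := hy
  calc c = c ^ a * c ^ b := by rw [← Real.rpow_add hc, hab, Real.rpow_one]
    _ ≤ f x ^ a * f y ^ b := by
      have := hf.nonneg x
      gcongr
    _ ≤ f (a • x + b • y) := hf.logConcave x y a b ha hb hab

lemma MemLC.exists_isMaxOn (hf : MemLC f) : ∃ x₀, 0 < f x₀ ∧ ∀ x, f x ≤ f x₀ := by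
  obtain ⟨y, hy⟩ := hf.nonzero
  obtain ⟨x₀, hx₀, hmax⟩ := UpperSemicontinuousOn.exists_isMaxOn (s := {x | f y ≤ f x})
    ⟨y, le_refl (f y)⟩ (hf.isCompact_superlevel hy) (hf.usc.upperSemicontinuousOn _)
  refine ⟨x₀, hy.trans_le hx₀, fun x => ?_⟩
  rcases le_total (f y) (f x) with hx | hx
  · exact hmax hx
  · exact hx.trans hx₀

lemma MemLC.bddAbove_range (hf : MemLC f) : BddAbove (range f) := by
  obtain ⟨x₀, -, hmax⟩ := hf.exists_isMaxOn
  exact ⟨f x₀, forall_mem_range.2 hmax⟩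

/- Log-concavity on the segment from `x₀` to `x`, evaluated at distance `R` from `x₀`, gives
`(f x / f x₀) ^ (R / ‖x - x₀‖) ≤ exp (-1)`. -/
lemma MemLC.le_mul_exp_of_le_norm_sub (hf : MemLC f) {x₀ : Euc n} (hx₀ : 0 < f x₀) {R : ℝ}
    (hR : 0 < R) (hfar : ∀ y, ‖y - x₀‖ = R → f y ≤ f x₀ * Real.exp (-1)) {x : Euc n}
    (hx : R ≤ ‖x - x₀‖) : f x ≤ f x₀ * Real.exp (-(‖x - x₀‖ / R)) := by
  set d := ‖x - x₀‖
  have hd : 0 < d := hR.trans_le hx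
  have hy : ‖(1 - R / d) • x₀ + (R / d) • x - x₀‖ = R := by
    rw [show (1 - R / d) • x₀ + (R / d) • x - x₀ = (R / d) • (x - x₀) by module, norm_smul,
      Real.norm_of_nonneg (by positivity), div_mul_cancel₀ _ hd.ne']
  have hconc := (hf.logConcave x₀ x (1 - R / d) (R / d)
    (sub_nonneg.2 ((div_le_one hd).2 hx)) (by positivity) (by ring)).trans (hfar _ hy)
  have hratio : (f x / f x₀) ^ (R / d) ≤ Real.exp (-1) := by
    rw [Real.rpow_sub hx₀, Real.rpow_one, div_mul_eq_mul_div, mul_div_assoc,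
      ← Real.div_rpow (hf.nonneg x) hx₀.le] at hconc
    exact le_of_mul_le_mul_left hconc hx₀
  have hpos : 0 ≤ f x / f x₀ := div_nonneg (hf.nonneg x) hx₀.le
  rw [← div_le_iff₀' hx₀]
  calc f x / f x₀ = ((f x / f x₀) ^ (R / d)) ^ (d / R) := by
        rw [← Real.rpow_mul hpos, div_mul_div_cancel₀ hd.ne', div_self hR.ne', Real.rpow_one]
    _ ≤ Real.exp (-1) ^ (d / R) := by gcongr
    _ = Real.exp (-(d / R)) := by rw [← Real.exp_mul, neg_one_mul]

lemma MemLC.exists_le_mul_exp_neg_norm (hf : MemLC f) :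
    ∃ A b : ℝ, 0 < A ∧ 0 < b ∧ ∀ x, f x ≤ A * Real.exp (-(b * ‖x‖)) := by
  obtain ⟨x₀, hx₀, hmax⟩ := hf.exists_isMaxOn
  obtain ⟨R, hR, hfar⟩ : ∃ R > 0, ∀ x, R ≤ ‖x - x₀‖ → f x ≤ f x₀ * Real.exp (-1) := by
    have hc : 0 < f x₀ * Real.exp (-1) := by positivity
    obtain ⟨R, hR, hsub⟩ :=
      (hf.isCompact_superlevel hc).isBounded.subset_ball_lt 0 x₀
    refine ⟨R, hR, fun x hx => le_of_lt (lt_of_not_ge fun hlt => ?_)⟩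
    exact (mem_ball_iff_norm.1 (hsub hlt)).not_ge hx
  have hdecay : ∀ x, f x ≤ f x₀ * Real.exp (1 - ‖x - x₀‖ / R) := by
    intro x
    rcases le_total R ‖x - x₀‖ with hx | hx
    · refine (hf.le_mul_exp_of_le_norm_sub hx₀ hR (fun y hy => hfar y hy.ge) hx).trans ?_
      gcongr
      linarith
    · refine (hmax x).trans (le_mul_of_one_le_right hx₀.le (Real.one_le_exp ?_))
      exact sub_nonneg.2 ((div_le_one hR).2 hx)
  refine ⟨f x₀ * Real.exp (1 + ‖x₀‖ / R), R⁻¹, by positivity, by positivity, fun x => ?_⟩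
  refine (hdecay x).trans ?_
  rw [mul_assoc, ← Real.exp_add]
  have htri : (‖x‖ - ‖x₀‖) / R ≤ ‖x - x₀‖ / R := by
    gcongr
    exact norm_sub_norm_le x x₀
  gcongr
  rw [sub_div] at htri
  rw [inv_mul_eq_div]
  linarith

end LogConcave

lemma integrable_exp_neg_mul_norm {E : Type*} [NormedAddCommGroup E] [NormedSpace ℝ E]
    [FiniteDimensional ℝ E] [MeasurableSpace E] [BorelSpace E] (μ : Measure E)
    [μ.IsAddHaarMeasure] {b : ℝ} (hb : 0 < b) :
    Integrable (fun x : E => Real.exp (-(b * ‖x‖))) μ := by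
  set k := Module.finrank ℝ E + 1
  have hJapanese : Integrable (fun x : E => (1 + ‖x‖) ^ (-(k : ℝ))) μ :=
    integrable_one_add_norm (by simp [k])
  refine (hJapanese.const_mul (k.factorial / b ^ k * Real.exp b)).mono' (by fun_prop)
    (ae_of_all _ fun x => ?_)
  have hpow : (b * (1 + ‖x‖)) ^ k / k.factorial ≤ Real.exp (b * (1 + ‖x‖)) :=
    Real.pow_div_factorial_le_exp _ (by positivity) k
  rw [Real.norm_of_nonneg (Real.exp_nonneg _), Real.rpow_neg (by positivity), Real.rpow_natCast,
    Real.exp_neg, inv_le_iff_one_le_mul₀ (Real.exp_pos _)]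
  rw [mul_pow, mul_add, mul_one, Real.exp_add, div_le_iff₀ (by positivity)] at hpow
  calc (1 : ℝ) = b ^ k * (1 + ‖x‖) ^ k * (b ^ k * (1 + ‖x‖) ^ k)⁻¹ := by field_simp
    _ ≤ Real.exp b * Real.exp (b * ‖x‖) * k.factorial * (b ^ k * (1 + ‖x‖) ^ k)⁻¹ := by gcongr
    _ = k.factorial / b ^ k * Real.exp b * ((1 + ‖x‖) ^ k)⁻¹ * Real.exp (b * ‖x‖) := by
      field_simp

section IndSup

variable {n : ℕ} {f : Euc n → ℝ} {C : Set (Euc n)}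

/- The inner supremum is over an empty index when `z ∉ t • C` and is then `0`, so `indSup f C t x`
is the supremum of the values `f (x - z)` together with `0`. -/
lemma indSup_nonneg (hf : ∀ x, 0 ≤ f x) (C : Set (Euc n)) (t : ℝ) (x : Euc n) :
    0 ≤ indSup f C t x :=
  Real.iSup_nonneg fun _ => Real.iSup_nonneg fun _ => hf _

lemma indSup_le {t c : ℝ} {x : Euc n} (hc : 0 ≤ c) (h : ∀ z ∈ t • C, f (x - z) ≤ c) :
    indSup f C t x ≤ c :=
  Real.iSup_le (fun z => Real.iSup_le (h z) hc) hc

lemma le_indSup (hf : ∀ x, 0 ≤ f x) (hbdd : BddAbove (range f)) {t : ℝ} {x z : Euc n}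
    (hz : z ∈ t • C) : f (x - z) ≤ indSup f C t x := by
  obtain ⟨M, hM⟩ := hbdd
  have hfM : ∀ y, f y ≤ M := fun y => hM (mem_range_self y)
  have hb : BddAbove (range fun w => ⨆ _ : w ∈ t • C, f (x - w)) :=
    ⟨M, forall_mem_range.2 fun w => Real.iSup_le (fun _ => hfM _) ((hf 0).trans (hfM 0))⟩
  have hle := le_ciSup hb z
  simp only [hz, ciSup_pos] at hle
  exact hle

lemma MemLC.le_indSup (hf : MemLC f) (h0 : (0 : Euc n) ∈ C) (t : ℝ) (x : Euc n) :
    f x ≤ indSup f C t x := by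
  simpa only [sub_zero] using
    _root_.le_indSup hf.nonneg hf.bddAbove_range (x := x) (zero_mem_smul_set (a := t) h0)

lemma MemLC.superlevel_indSup (hf : MemLC f) (hC : IsCompact C) (hne : C.Nonempty) (t : ℝ)
    (c : ℝ) : {x | c ≤ indSup f C t x} = {x | c ≤ f x} + t • C := by
  ext x
  constructor
  · intro (hx : c ≤ indSup f C t x)
    have husc : UpperSemicontinuous fun z => f (x - z) :=
      hf.usc.comp (continuous_const.sub continuous_id)
    obtain ⟨z, hz, hmax⟩ := UpperSemicontinuousOn.exists_isMaxOn (hne.smul_set (a := t))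
      (hC.smul t) (husc.upperSemicontinuousOn _)
    exact ⟨x - z, hx.trans (indSup_le (hf.nonneg _) fun w hw => hmax hw), z, hz,
      sub_add_cancel x z⟩
  · rintro ⟨y, (hy : c ≤ f y), z, hz, rfl⟩
    refine hy.trans ?_
    simpa only [add_sub_cancel_right] using
      _root_.le_indSup hf.nonneg hf.bddAbove_range (x := y + z) hz

lemma MemLC.upperSemicontinuous_indSup (hf : MemLC f) (hC : IsCompact C) (hne : C.Nonempty)
    (t : ℝ) : UpperSemicontinuous (indSup f C t) := by
  refine upperSemicontinuous_iff_isClosed_preimage.2 fun c => ?_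
  change IsClosed {x | c ≤ indSup f C t x}
  rw [hf.superlevel_indSup hC hne]
  exact (hf.usc.isClosed_preimage c).add_right_of_isCompact (hC.smul t)

lemma MemLC.integrable_indSup (hf : MemLC f) (hC : IsCompact C) (hne : C.Nonempty) (t : ℝ) :
    Integrable (indSup f C t) := by
  obtain ⟨A, b, hA, hb, hexp⟩ := hf.exists_le_mul_exp_neg_norm
  obtain ⟨ρ, -, hρ⟩ := (hC.smul t).isBounded.exists_pos_norm_le
  refine ((integrable_exp_neg_mul_norm volume hb).const_mul (A * Real.exp (b * ρ))).mono'
    (hf.upperSemicontinuous_indSup hC hne t).measurable.aestronglyMeasurable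
    (ae_of_all _ fun x => ?_)
  rw [Real.norm_of_nonneg (indSup_nonneg hf.nonneg C t x)]
  refine indSup_le (by positivity) fun z hz => (hexp (x - z)).trans ?_
  rw [mul_assoc, ← Real.exp_add]
  have htri : b * ‖x‖ ≤ b * (‖x - z‖ + ρ) := by
    gcongr
    linarith [norm_le_norm_sub_add x z, hρ z hz]
  gcongr
  linarith

lemma MemLC.integrable (hf : MemLC f) : Integrable f :=
  (hf.integrable_indSup isCompact_singleton (singleton_nonempty 0) 0).mono'
    hf.usc.measurable.aestronglyMeasurable (ae_of_all _ fun x => by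
      rw [Real.norm_of_nonneg (hf.nonneg x)]
      exact hf.le_indSup (mem_singleton 0) 0 x)

lemma MemLC.integral_le_integral_indSup (hf : MemLC f) (hC : IsCompact C)
    (h0 : (0 : Euc n) ∈ C) (t : ℝ) : ∫ x, f x ≤ ∫ x, indSup f C t x :=
  integral_mono hf.integrable (hf.integrable_indSup hC ⟨0, h0⟩ t) (hf.le_indSup h0 t)

lemma HasVarInd.nonneg (hf : MemLC f) (hC : IsCompact C) (h0 : (0 : Euc n) ∈ C) {a : ℝ}
    (ha : HasVarInd f C a) : 0 ≤ a := by
  refine ge_of_tendsto ha (eventually_mem_nhdsWithin.mono fun t ht => ?_)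
  exact div_nonneg (sub_nonneg.2 (hf.integral_le_integral_indSup hC h0 t)) (le_of_lt ht)

end IndSup

section MinkowskiQuotient

/-- The difference quotient `(vol (K + tC) - vol K) / t`, whose limit as `t → 0⁺` is the
anisotropic Minkowski content of the boundary of `K` with respect to `C`. It is `ℝ≥0∞`-valued so
that it can be integrated over the superlevel sets `K` of a function. -/
def minkowskiQuotient {E : Type*} [AddCommGroup E] [Module ℝ E] [MeasureSpace E] (C K : Set E)
    (t : ℝ) : ℝ≥0∞ :=
  (volume (K + t • C) - volume K) / ENNReal.ofReal t

lemma minkowskiQuotient_add {E : Type*} [AddCommGroup E] [Module ℝ E] [MeasureSpace E]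
    {C D : Set E} (hC : 0 ∈ C) (hD : 0 ∈ D) (K : Set E) (t : ℝ) :
    minkowskiQuotient (C + D) K t
      = minkowskiQuotient C (K + t • D) t + minkowskiQuotient D K t := by
  have hCD : K + t • (C + D) = K + t • D + t • C := by
    rw [smul_add, add_comm (t • C), add_assoc]
  have hle (A : Set E) {B : Set E} (hB : 0 ∈ B) : volume A ≤ volume (A + t • B) :=
    measure_mono (subset_add_left A (zero_mem_smul_set hB))
  rw [minkowskiQuotient, minkowskiQuotient, minkowskiQuotient, ← ENNReal.add_div, hCD,
    tsub_add_tsub_cancel (hle _ hC) (hle _ hD)]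

lemma smul_subset_smul_of_convex {E : Type*} [AddCommGroup E] [Module ℝ E] {C : Set E}
    (hC : Convex ℝ C) (h0 : 0 ∈ C) {t t' : ℝ} (ht : 0 < t) (htt' : t ≤ t') : t • C ⊆ t' • C := by
  rintro _ ⟨x, hx, rfl⟩
  have hx' : x ∈ (t' / t) • C := hC.mem_smul_of_zero_mem h0 hx ((one_le_div ht).2 htt')
  simpa only [smul_smul, mul_div_cancel₀ _ ht.ne'] using smul_mem_smul_set (a := t) hx'

/-- The segment `[-eᵢ, eᵢ]` on the `i`-th coordinate axis. The sum of these segments over all `i`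
is the cube. -/
def axisSegment {n : ℕ} (i : Fin n) : Set (Euc n) :=
  (fun r : ℝ => r • EuclideanSpace.single i (1 : ℝ)) '' Icc (-1) 1

variable {n : ℕ}

lemma zero_mem_axisSegment (i : Fin n) : 0 ∈ axisSegment i :=
  ⟨0, by norm_num, zero_smul ℝ _⟩

lemma isCompact_axisSegment (i : Fin n) : IsCompact (axisSegment i) :=
  isCompact_Icc.image (by fun_prop)

lemma convex_axisSegment (i : Fin n) : Convex ℝ (axisSegment i) :=
  (convex_Icc (-1 : ℝ) 1).linear_image (LinearMap.toSpanSingleton ℝ (Euc n) _)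

lemma smul_axisSegment (i : Fin n) {t : ℝ} (ht : 0 ≤ t) :
    t • axisSegment i = (fun r : ℝ => r • EuclideanSpace.single i (1 : ℝ)) '' Icc (-t) t := by
  have hIcc : (fun r => t * r) '' Icc (-1) 1 = Icc (-t) t := by
    rw [image_mul_left_Icc ht (by norm_num), mul_neg, mul_one]
  rw [axisSegment, ← image_smul, image_image, ← hIcc, image_image]
  simp only [smul_smul]

lemma isCompact_sum_axisSegment (s : Finset (Fin n)) : IsCompact (∑ i ∈ s, axisSegment i) :=
  Finset.sum_induction _ IsCompact (fun _ _ => IsCompact.add) isCompact_singleton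
    fun i _ => isCompact_axisSegment i

lemma zero_mem_sum_axisSegment (s : Finset (Fin n)) : (0 : Euc n) ∈ ∑ i ∈ s, axisSegment i :=
  Finset.sum_induction _ (fun C : Set (Euc n) => (0 : Euc n) ∈ C)
    (fun _ _ hC hD => ⟨0, hC, 0, hD, add_zero 0⟩) (mem_singleton 0)
    fun i _ => zero_mem_axisSegment i

lemma convex_sum_axisSegment (s : Finset (Fin n)) : Convex ℝ (∑ i ∈ s, axisSegment i) :=
  convex_sum _ fun i _ => convex_axisSegment i

lemma volume_add_Icc {I : Set ℝ} (hI : IsCompact I) (hconv : Convex ℝ I) (hne : I.Nonempty)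
    {t : ℝ} (ht : 0 ≤ t) : volume (I + Icc (-t) t) = volume I + ENNReal.ofReal (2 * t) := by
  obtain ⟨a, b, hab, rfl⟩ : ∃ a b, a ≤ b ∧ I = Icc a b := by
    have h := eq_Icc_of_connected_compact ⟨hne, hconv.isPreconnected⟩ hI
    exact ⟨_, _, nonempty_Icc.1 (h ▸ hne), h⟩
  rw [Icc_add_Icc hab (neg_le_self ht), Real.volume_Icc, Real.volume_Icc,
    ← ENNReal.ofReal_add (sub_nonneg.2 hab) (by positivity)]
  ring_nf

/-- The slice of `A` by the line through `y` in the direction of the `i`-th axis, where `y` lists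
the other coordinates. -/
def axisSlice (i : Fin (n + 1)) (A : Set (Euc (n + 1))) (y : Fin n → ℝ) : Set ℝ :=
  {u | WithLp.toLp 2 (i.insertNth u y) ∈ A}

/-- The projection of `A` that forgets the `i`-th coordinate. -/
def dropCoord (i : Fin (n + 1)) (A : Set (Euc (n + 1))) : Set (Fin n → ℝ) :=
  (fun x : Euc (n + 1) => i.removeNth x) '' A

lemma axisSlice_nonempty_iff {i : Fin (n + 1)} {A : Set (Euc (n + 1))} {y : Fin n → ℝ} :
    (axisSlice i A y).Nonempty ↔ y ∈ dropCoord i A := by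
  constructor
  · rintro ⟨u, hu⟩
    exact ⟨_, hu, Fin.removeNth_insertNth (α := fun _ => ℝ) i u y⟩
  · rintro ⟨x, hx, rfl⟩
    refine ⟨x i, ?_⟩
    rwa [axisSlice, mem_ofPred_eq, Fin.insertNth_self_removeNth]

lemma volume_eq_lintegral_volume_axisSlice (i : Fin (n + 1)) {A : Set (Euc (n + 1))}
    (hA : MeasurableSet A) : volume A = ∫⁻ y, volume (axisSlice i A y) := by
  have he := (PiLp.volume_preserving_toLp (Fin (n + 1))).comp
    (volume_preserving_piFinSuccAbove (fun _ : Fin (n + 1) => ℝ) i).symm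
  rw [← he.measure_preimage hA.nullMeasurableSet, Measure.volume_eq_prod,
    Measure.prod_apply_symm (he.measurable hA)]
  rfl

lemma toLp_insertNth_add_smul_single (i : Fin (n + 1)) (u r : ℝ) (y : Fin n → ℝ) :
    WithLp.toLp 2 (i.insertNth u y) + r • EuclideanSpace.single i (1 : ℝ)
      = WithLp.toLp 2 (i.insertNth (u + r) y : Fin (n + 1) → ℝ) := by
  ext j
  rcases Fin.eq_self_or_eq_succAbove i j with rfl | ⟨k, rfl⟩ <;> simp

lemma axisSlice_add_smul_axisSegment (i : Fin (n + 1)) (A : Set (Euc (n + 1))) (y : Fin n → ℝ)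
    {t : ℝ} (ht : 0 ≤ t) :
    axisSlice i (A + t • axisSegment i) y = axisSlice i A y + Icc (-t) t := by
  rw [smul_axisSegment i ht]
  ext u
  constructor
  · rintro ⟨x, hx, _, ⟨r, hr, rfl⟩, hxu⟩
    refine ⟨u - r, ?_, r, hr, sub_add_cancel u r⟩
    have hx_eq : x = WithLp.toLp 2 (i.insertNth (u - r) y) := by
      rw [sub_eq_add_neg, ← toLp_insertNth_add_smul_single, ← hxu, neg_smul, add_neg_cancel_right]
    rwa [axisSlice, mem_ofPred_eq, ← hx_eq]
  · rintro ⟨v, hv, r, hr, rfl⟩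
    exact ⟨_, hv, _, ⟨r, hr, rfl⟩, toLp_insertNth_add_smul_single i v r y⟩

lemma isCompact_axisSlice (i : Fin (n + 1)) {A : Set (Euc (n + 1))} (hA : IsCompact A)
    (y : Fin n → ℝ) : IsCompact (axisSlice i A y) := by
  refine (hA.image (PiLp.continuous_apply 2 _ i)).of_isClosed_subset
    (hA.isClosed.preimage (by fun_prop)) fun u hu => ⟨_, hu, ?_⟩
  exact Fin.insertNth_apply_same (α := fun _ => ℝ) i u y

lemma convex_axisSlice (i : Fin (n + 1)) {A : Set (Euc (n + 1))} (hA : Convex ℝ A)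
    (y : Fin n → ℝ) : Convex ℝ (axisSlice i A y) := by
  intro u hu v hv a b ha hb hab
  have hcomb : WithLp.toLp 2 (i.insertNth (a • u + b • v) y : Fin (n + 1) → ℝ)
      = a • WithLp.toLp 2 (i.insertNth u y) + b • WithLp.toLp 2 (i.insertNth v y) := by
    ext j
    rcases Fin.eq_self_or_eq_succAbove i j with rfl | ⟨k, rfl⟩
    · simp
    · simp [← add_mul, hab]
  rw [axisSlice, mem_ofPred_eq, hcomb]
  exact hA hu hv ha hb hab

lemma volume_axisSlice_add_Icc (i : Fin (n + 1)) {A : Set (Euc (n + 1))} (hA : IsCompact A)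
    (hconv : Convex ℝ A) {t : ℝ} (ht : 0 ≤ t) (y : Fin n → ℝ) :
    volume (axisSlice i A y + Icc (-t) t) = volume (axisSlice i A y)
      + (dropCoord i A).indicator (fun _ => ENNReal.ofReal (2 * t)) y := by
  by_cases hy : y ∈ dropCoord i A
  · rw [indicator_of_mem hy]
    exact volume_add_Icc (isCompact_axisSlice i hA y) (convex_axisSlice i hconv y)
      (axisSlice_nonempty_iff.2 hy) ht
  · rw [indicator_of_notMem hy, not_nonempty_iff_eq_empty.1 (mt axisSlice_nonempty_iff.1 hy),
      empty_add, measure_empty, add_zero]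

lemma isCompact_dropCoord (i : Fin (n + 1)) {A : Set (Euc (n + 1))} (hA : IsCompact A) :
    IsCompact (dropCoord i A) :=
  hA.image (by unfold Fin.removeNth; fun_prop)

lemma volume_add_smul_axisSegment (i : Fin (n + 1)) {A : Set (Euc (n + 1))} (hA : IsCompact A)
    (hconv : Convex ℝ A) {t : ℝ} (ht : 0 ≤ t) :
    volume (A + t • axisSegment i)
      = volume A + ENNReal.ofReal (2 * t) * volume (dropCoord i A) := by
  have hdrop := (isCompact_dropCoord i hA).measurableSet
  have hsum := hA.add ((isCompact_axisSegment i).smul t)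
  rw [volume_eq_lintegral_volume_axisSlice i hsum.measurableSet]
  simp only [axisSlice_add_smul_axisSegment i A _ ht, volume_axisSlice_add_Icc i hA hconv ht]
  rw [lintegral_add_right _ (measurable_const.indicator hdrop), lintegral_indicator_const hdrop,
    ← volume_eq_lintegral_volume_axisSlice i hA.measurableSet]

lemma minkowskiQuotient_axisSegment (i : Fin (n + 1)) {A : Set (Euc (n + 1))} (hA : IsCompact A)
    (hconv : Convex ℝ A) {t : ℝ} (ht : 0 < t) :
    minkowskiQuotient (axisSegment i) A t = 2 * volume (dropCoord i A) := by
  rw [minkowskiQuotient, volume_add_smul_axisSegment i hA hconv ht.le,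
    ENNReal.add_sub_cancel_left hA.measure_lt_top.ne, ENNReal.ofReal_mul zero_le_two,
    ENNReal.ofReal_ofNat, mul_right_comm, mul_div_assoc, ENNReal.div_self, mul_one]
  · exact (ENNReal.ofReal_pos.2 ht).ne'
  · exact ENNReal.ofReal_ne_top

lemma monotoneOn_minkowskiQuotient_sum_axisSegment (s : Finset (Fin n)) {K : Set (Euc n)}
    (hK : IsCompact K) (hconv : Convex ℝ K) :
    MonotoneOn (minkowskiQuotient (∑ i ∈ s, axisSegment i) K) (Ioi 0) := by
  induction s using Finset.induction_on with
  | empty =>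
    have h : minkowskiQuotient (∑ i ∈ ∅, axisSegment i) K = 0 := by
      funext t
      simp [minkowskiQuotient]
    exact h ▸ monotoneOn_const
  | insert i s hi ih =>
    obtain _ | n := n
    · exact i.elim0
    intro t (ht : 0 < t) t' (ht' : 0 < t') htt'
    set C := ∑ j ∈ s, axisSegment j
    have hquot {r : ℝ} (hr : 0 < r) : minkowskiQuotient (∑ j ∈ insert i s, axisSegment j) K r
        = 2 * volume (dropCoord i (K + r • C)) + minkowskiQuotient C K r := by
      rw [Finset.sum_insert hi,
        minkowskiQuotient_add (zero_mem_axisSegment i) (zero_mem_sum_axisSegment s),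
        minkowskiQuotient_axisSegment i (hK.add ((isCompact_sum_axisSegment s).smul r))
          (hconv.add ((convex_sum_axisSegment s).smul r)) hr]
    have hmono : K + t • C ⊆ K + t' • C :=
      add_subset_add_left (smul_subset_smul_of_convex (convex_sum_axisSegment s)
        (zero_mem_sum_axisSegment s) ht htt')
    rw [hquot ht, hquot ht']
    gcongr
    · exact image_mono hmono
    · exact ih ht ht' htt'

end MinkowskiQuotient

section FirstVariation

variable {n : ℕ} {f : Euc n → ℝ} {C : Set (Euc n)}

lemma measurable_measure_superlevel {α : Type*} [MeasurableSpace α] (μ : Measure α)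
    (g : α → ℝ) : Measurable fun c => μ {x | c ≤ g x} :=
  Antitone.measurable fun _ _ hcd => measure_mono fun _ hx => hcd.trans hx

lemma ofReal_integral_eq_lintegral_measure_superlevel {α : Type*} [MeasurableSpace α]
    {μ : Measure α} {g : α → ℝ} (hg : Integrable g μ) (hg0 : ∀ x, 0 ≤ g x) :
    ENNReal.ofReal (∫ x, g x ∂μ) = ∫⁻ c in Ioi 0, μ {x | c ≤ g x} := by
  rw [ofReal_integral_eq_lintegral_ofReal hg (ae_of_all _ hg0),
    lintegral_eq_lintegral_meas_le μ (ae_of_all _ hg0) hg.aemeasurable]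

lemma MemLC.lintegral_minkowskiQuotient (hf : MemLC f) (hC : IsCompact C) (h0 : (0 : Euc n) ∈ C)
    {t : ℝ} (ht : 0 < t) :
    ∫⁻ c in Ioi 0, minkowskiQuotient C {x | c ≤ f x} t
      = ENNReal.ofReal (((∫ x, indSup f C t x) - ∫ x, f x) / t) := by
  have hlayer := ofReal_integral_eq_lintegral_measure_superlevel hf.integrable hf.nonneg
  have hlayer_indSup := ofReal_integral_eq_lintegral_measure_superlevel
    (hf.integrable_indSup hC ⟨0, h0⟩ t) (indSup_nonneg hf.nonneg C t)
  have hmeas := measurable_measure_superlevel volume f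
  have hmeas_indSup := measurable_measure_superlevel volume (indSup f C t)
  have hfin : ∫⁻ c in Ioi 0, volume {x | c ≤ f x} ≠ ∞ := by
    rw [← hlayer]
    exact ENNReal.ofReal_ne_top
  have hle (c : ℝ) : volume {x | c ≤ f x} ≤ volume {x | c ≤ indSup f C t x} :=
    measure_mono fun x hx => le_trans hx (hf.le_indSup h0 t x)
  simp only [minkowskiQuotient, ← hf.superlevel_indSup hC ⟨0, h0⟩, div_eq_mul_inv]
  rw [lintegral_mul_const _ (by fun_prop), lintegral_sub hmeas hfin (ae_of_all _ hle), ← hlayer,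
    ← hlayer_indSup, ← div_eq_mul_inv, ← div_eq_mul_inv, ENNReal.ofReal_div_of_pos ht,
    ENNReal.ofReal_sub _ (integral_nonneg hf.nonneg)]

lemma MemLC.exists_hasVarInd (hf : MemLC f) (hC : IsCompact C) (h0 : (0 : Euc n) ∈ C)
    (hmono : ∀ K : Set (Euc n), IsCompact K → Convex ℝ K →
      MonotoneOn (minkowskiQuotient C K) (Ioi 0)) : ∃ a, HasVarInd f C a := by
  have hquot_nonneg {t : ℝ} (ht : 0 < t) : 0 ≤ ((∫ x, indSup f C t x) - ∫ x, f x) / t :=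
    div_nonneg (sub_nonneg.2 (hf.integral_le_integral_indSup hC h0 t)) ht.le
  refine ⟨_, MonotoneOn.tendsto_nhdsGT (fun t ht t' ht' htt' => ?_) ⟨0, ?_⟩⟩
  · rw [← ENNReal.ofReal_le_ofReal_iff (hquot_nonneg ht'),
      ← hf.lintegral_minkowskiQuotient hC h0 ht, ← hf.lintegral_minkowskiQuotient hC h0 ht']
    exact setLIntegral_mono' measurableSet_Ioi fun c hc =>
      hmono _ (hf.isCompact_superlevel hc) (hf.convex_superlevel hc) ht ht' htt'
  · rintro _ ⟨t, ht, rfl⟩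
    exact hquot_nonneg ht

end FirstVariation

section CrossPolytope

variable {n : ℕ} {f : Euc n → ℝ}

/-- The unit ball of the `ℓ¹` norm. It is the convex body whose polar is the cube. -/
def crossPolytope (n : ℕ) : Set (Euc n) :=
  {x | ∑ i, |x i| ≤ 1}

/-- The identity of `ℝⁿ` as an isomorphism from the Euclidean norm to the `ℓ¹` norm. It
transports the topological and convexity properties of the `ℓ¹` ball to `Euc n`. -/
def euclideanEquivL1 (n : ℕ) : Euc n ≃L[ℝ] PiLp 1 fun _ : Fin n => ℝ :=
  (PiLp.continuousLinearEquiv 2 ℝ _).trans (PiLp.continuousLinearEquiv 1 ℝ _).symm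

lemma crossPolytope_eq_preimage_closedBall (n : ℕ) :
    crossPolytope n = euclideanEquivL1 n ⁻¹' closedBall 0 1 := by
  ext x
  rw [mem_preimage, mem_closedBall_zero_iff, PiLp.norm_eq_of_L1]
  rfl

lemma isCompact_crossPolytope (n : ℕ) : IsCompact (crossPolytope n) := by
  rw [crossPolytope_eq_preimage_closedBall]
  exact (euclideanEquivL1 n).toHomeomorph.isCompact_preimage.2 (isCompact_closedBall _ _)

lemma convex_crossPolytope (n : ℕ) : Convex ℝ (crossPolytope n) := by
  rw [crossPolytope_eq_preimage_closedBall]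
  exact (convex_closedBall _ _).linear_preimage (euclideanEquivL1 n).toLinearMap

lemma interior_crossPolytope_nonempty (n : ℕ) : (interior (crossPolytope n)).Nonempty := by
  refine ⟨0, mem_interior_iff_mem_nhds.2 ?_⟩
  rw [crossPolytope_eq_preimage_closedBall]
  refine (euclideanEquivL1 n).continuous.continuousAt.preimage_mem_nhds ?_
  rw [map_zero]
  exact closedBall_mem_nhds _ one_pos

lemma neg_crossPolytope (n : ℕ) : -crossPolytope n = crossPolytope n := by
  ext x
  simp only [crossPolytope, Set.mem_neg, mem_ofPred_eq, PiLp.neg_apply, abs_neg]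

lemma sum_axisSegment_eq_setOf_abs_le (n : ℕ) :
    ∑ i, axisSegment i = {y : Euc n | ∀ i, |y i| ≤ 1} := by
  have hcoord (r : Fin n → ℝ) :
      ∑ i, r i • EuclideanSpace.single i (1 : ℝ) = (WithLp.toLp 2 r : Euc n) := by
    simpa using (EuclideanSpace.basisFun (Fin n) ℝ).sum_repr (WithLp.toLp 2 r)
  ext y
  rw [mem_fintype_sum]
  constructor
  · rintro ⟨g, hg, rfl⟩
    choose r hr hrg using hg
    simp only [← hrg, hcoord]
    exact fun i => abs_le.2 (hr i)
  · exact fun hy => ⟨fun i => y i • EuclideanSpace.single i 1,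
      fun i => ⟨y i, abs_le.1 (hy i), rfl⟩, hcoord y⟩

lemma polarSet_crossPolytope (n : ℕ) : polarSet (crossPolytope n) = ∑ i, axisSegment i := by
  rw [sum_axisSegment_eq_setOf_abs_le]
  ext y
  constructor
  · intro hy i
    have hvertex (r : ℝ) (hr : |r| = 1) : r * y i ≤ 1 := by
      have hmem : EuclideanSpace.single i r ∈ crossPolytope n := by
        simp [crossPolytope, apply_ite abs, hr]
      simpa [EuclideanSpace.inner_single_left, mul_comm] using hy _ hmem
    exact abs_le'.2 ⟨by simpa using hvertex 1 abs_one, by simpa using hvertex (-1) (by simp)⟩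
  · intro hy x hx
    calc ⟪x, y⟫ = ∑ i, x i * y i := by simp [PiLp.inner_apply, mul_comm]
      _ ≤ ∑ i, |x i| := Finset.sum_le_sum fun i _ => (le_abs_self _).trans <| by
        rw [abs_mul]
        exact mul_le_of_le_one_right (abs_nonneg _) (hy i)
      _ ≤ 1 := hx

lemma MemLC.gsaSet_nonempty (hf : MemLC f) : (gsaSet n f).Nonempty := by
  obtain ⟨a, ha⟩ := hf.exists_hasVarInd (isCompact_sum_axisSegment Finset.univ)
    (zero_mem_sum_axisSegment _)
    fun K hK hconv => monotoneOn_minkowskiQuotient_sum_axisSegment _ hK hconv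
  exact ⟨_, crossPolytope n, a, isCompact_crossPolytope n, convex_crossPolytope n,
    interior_crossPolytope_nonempty n, setIntegral_id_eq_zero_of_neg_eq (neg_crossPolytope n),
    (polarSet_crossPolytope n).symm ▸ ha, rfl⟩

end CrossPolytope

section Comparison

variable {n : ℕ} {f : Euc n → ℝ}

lemma nonneg_of_mem_asaSet (hf : MemLC f) {y : ℝ} (hy : y ∈ asaSet n f) : 0 ≤ y := by
  obtain ⟨Q, a, hQ, ha, rfl⟩ := hy
  have ha0 := ha.nonneg hf (isCompact_polarSet hQ.zero_mem_interior) (zero_mem_polarSet Q)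
  positivity

lemma toReal_volume_closedBall_pos (n : ℕ) : 0 < (volume (closedBall (0 : Euc n) 1)).toReal :=
  ENNReal.toReal_pos (measure_closedBall_pos _ _ one_pos).ne' measure_closedBall_lt_top.ne

lemma mul_mem_asaSet_of_mem_gsaSet {y : ℝ} (hy : y ∈ gsaSet n f) :
    (volume (closedBall (0 : Euc n) 1)).toReal ^ ((1 : ℝ) / n) * y ∈ asaSet n f := by
  obtain ⟨Q, a, hQ, hconv, hint, hcentroid, ha, rfl⟩ := hy
  refine ⟨Q, a, .of_convex hQ hconv hint hcentroid, ha, ?_⟩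
  have hω := toReal_volume_closedBall_pos n
  rw [mul_left_comm, ← Real.mul_rpow hω.le (by positivity), mul_div_cancel₀ _ hω.ne']

lemma MemLC.sInf_asaSet_le (hf : MemLC f) : sInf (asaSet n f)
    ≤ (volume (closedBall (0 : Euc n) 1)).toReal ^ ((1 : ℝ) / n) * geomSA n f := by
  set ω := (volume (closedBall (0 : Euc n) 1)).toReal
  have hω : 0 < ω ^ ((1 : ℝ) / n) := Real.rpow_pos_of_pos (toReal_volume_closedBall_pos n) _
  have hbdd : BddBelow (asaSet n f) := ⟨0, fun _ => nonneg_of_mem_asaSet hf⟩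
  rw [← div_le_iff₀' hω]
  refine le_csInf hf.gsaSet_nonempty fun y hy => ?_
  rw [div_le_iff₀' hω]
  exact csInf_le hbdd (mul_mem_asaSet_of_mem_gsaSet hy)

lemma affSA_pow_succ (hf : MemLC f) :
    affSA n f ^ (n + 1) = n * sInf (asaSet n f) ^ n := by
  have hinf : 0 ≤ sInf (asaSet n f) := Real.sInf_nonneg fun _ => nonneg_of_mem_asaSet hf
  have hexp {b : ℝ} (hb : 0 ≤ b) (k : ℕ) : (b ^ ((k : ℝ) / (n + 1))) ^ (n + 1) = b ^ k := by
    rw [← Real.rpow_mul_natCast hb, Nat.cast_succ, div_mul_cancel₀ _ (by positivity),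
      Real.rpow_natCast]
  have h1 := hexp (Nat.cast_nonneg n) 1
  rw [Nat.cast_one, pow_one] at h1
  rw [affSA, mul_pow, h1, hexp hinf n]

end Comparison

theorem stmt11 {n : ℕ} (hn : 1 ≤ n) (f : Euc n → ℝ) (hf : MemLC f) :
    affSA n f ^ (n + 1)
      ≤ (n : ℝ) * (volume (closedBall (0 : Euc n) 1)).toReal * geomSA n f ^ n := by
  set ω := (volume (closedBall (0 : Euc n) 1)).toReal
  have hinf : 0 ≤ sInf (asaSet n f) := Real.sInf_nonneg fun _ => nonneg_of_mem_asaSet hf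
  calc affSA n f ^ (n + 1) = n * sInf (asaSet n f) ^ n := affSA_pow_succ hf
    _ ≤ n * (ω ^ ((1 : ℝ) / n) * geomSA n f) ^ n := by
      gcongr
      exact hf.sInf_asaSet_le
    _ = n * ω * geomSA n f ^ n := by
      rw [mul_pow, one_div, Real.rpow_inv_natCast_pow ENNReal.toReal_nonneg (by lia), mul_assoc]

end
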